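/- Let (F_0, a) be initial data for the completion problem in ℂ^d with k ≥ d, let f : [0,∞) → [0,∞) be strictly convex, and let F = (F_0, G) ∈ C_a(F_0) be a global minimizer of P_f on C_a(F_0), with associated block structure 0 = s_0 < s_1 < … < s_p and constants c_1 > … > c_p > 0 as in the structure theorem, and suppose p > 1. Then the indices and constants are given recursively by: s_1 = max{j ≤ s_{p−1} : P_{1,j} = max_{1 ≤ i ≤ s_{p−1}} P_{1,i}} and c_1 = P_{1,s_1}; and for each j with s_j < s_{p−1}, s_{j+1} = max{r : s_j < r ≤ s_{p−1} and P_{s_j+1, r} = max_{s_j < i ≤ s_{p−1}} P_{s_j+1, i}} and c_{j+1} = P_{s_j+1, s_{j+1}}. -/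

import Mathlib

open Finset
open scoped ComplexOrder

noncomputable def sortAsc {m : ℕ} (x : Fin m → ℝ) : Fin m → ℝ :=
  x ∘ Tuple.sort x

noncomputable def sortDesc {m : ℕ} (x : Fin m → ℝ) : Fin m → ℝ :=
  fun i => (x ∘ Tuple.sort x) i.rev

noncomputable def pad {k : ℕ} (x : Fin k → ℝ) (m : ℕ) : Fin m → ℝ :=
  fun i => if h : (i : ℕ) < k then x ⟨i, h⟩ else 0

/-- `MajorizedBy x y` means `x ≺ y`. -/
def MajorizedBy {m : ℕ} (x y : Fin m → ℝ) : Prop :=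
  (∀ j : Fin m, ∑ i ∈ Finset.Iic j, sortDesc x i ≤ ∑ i ∈ Finset.Iic j, sortDesc y i) ∧
    ∑ i, x i = ∑ i, y i

/-- Majorization of vectors of possibly different lengths, padding with zeros. -/
def MajorizedByPad {k m : ℕ} (x : Fin k → ℝ) (y : Fin m → ℝ) : Prop :=
  MajorizedBy (pad x (max k m)) (pad y (max k m))

/-- The frame operator `S_F = ∑ f_i f_i^*` of a finite sequence of vectors in `ℂ^d`. -/
noncomputable def frameOp {d n : ℕ} (F : Fin n → Fin d → ℂ) : Matrix (Fin d) (Fin d) ℂ :=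
  ∑ l, Matrix.vecMulVec (F l) (star (F l))

/-- The squared norm `‖g‖²` of a vector in `ℂ^d`. -/
noncomputable def normSqVec {d : ℕ} (g : Fin d → ℂ) : ℝ :=
  ∑ i, Complex.normSq (g i)

open scoped Classical in
/-- Eigenvalues of a (Hermitian) matrix arranged in decreasing order. -/
noncomputable def eigsDesc {d : ℕ} (S : Matrix (Fin d) (Fin d) ℂ) : Fin d → ℝ :=
  if h : S.IsHermitian then sortDesc h.eigenvalues else 0

open scoped Classical in
/-- Eigenvalues of a (Hermitian) matrix arranged in increasing order. -/
noncomputable def eigsAsc {d : ℕ} (S : Matrix (Fin d) (Fin d) ℂ) : Fin d → ℝ :=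
  if h : S.IsHermitian then sortAsc h.eigenvalues else 0

/-- `Γ_d(a)`: non-increasing nonnegative vectors in `ℝ^d` majorizing `a`. -/
def Gamma {k : ℕ} (d : ℕ) (a : Fin k → ℝ) : Set (Fin d → ℝ) :=
  {μ | Antitone μ ∧ (∀ i, 0 ≤ μ i) ∧ MajorizedByPad a μ}

/-- The convex potential `P_f = tr f(S) = ∑ f(λ_i(S))`. -/
noncomputable def potential {d : ℕ} (f : ℝ → ℝ) (S : Matrix (Fin d) (Fin d) ℂ) : ℝ :=
  ∑ i, f (eigsDesc S i)

/-- Final averages `Q_{j,r} = (1/(r-j)) (∑_{i=j+1}^k a_i + ∑_{i=j+1}^r λ_i)` (1-based). -/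
noncomputable def finalAvg {d k : ℕ} (lam : Fin d → ℝ) (a : Fin k → ℝ) (j r : ℕ) : ℝ :=
  ((∑ i : Fin k, if j ≤ (i : ℕ) then a i else 0) +
      (∑ i : Fin d, if j ≤ (i : ℕ) ∧ (i : ℕ) < r then lam i else 0)) / ((r : ℝ) - (j : ℝ))

/-- Initial averages: `initAvg lam a lo hi = P_{lo+1,hi}` (1-based), i.e. the average of
`h_i = λ_i + a_i` over the (0-based) index window `[lo, hi)`. -/
noncomputable def initAvg {d k : ℕ} (lam : Fin d → ℝ) (a : Fin k → ℝ) (lo hi : ℕ) : ℝ :=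
  ((∑ i : Fin d, if lo ≤ (i : ℕ) ∧ (i : ℕ) < hi then lam i else 0) +
      (∑ i : Fin k, if lo ≤ (i : ℕ) ∧ (i : ℕ) < hi then a i else 0)) / ((hi : ℝ) - (lo : ℝ))

/-- 1-based access to a vector indexed by `Fin d`. -/
noncomputable def get1 {d : ℕ} (lam : Fin d → ℝ) (i : ℕ) : ℝ :=
  if h : i - 1 < d then lam ⟨i - 1, h⟩ else 0

/-- The index `s` is feasible for the pair `(λ, a)`: the unique vector
`ν_s = (c·1_{r-s}, λ_{r+1},…,λ_d)` determined by the truncated data satisfies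
`a^s ≺ ν_s - λ^s`. -/
def FeasibleIdx {d k : ℕ} (lam : Fin d → ℝ) (a : Fin k → ℝ) (s : ℕ) : Prop :=
  ∃ r : ℕ, ∃ c : ℝ, s < r ∧ r ≤ d ∧ 0 < c ∧
    (∀ i : Fin d, s ≤ (i : ℕ) → (i : ℕ) < r → lam i ≤ c) ∧
    (∀ hrd : r < d, c ≤ lam ⟨r, hrd⟩) ∧
    ((r : ℝ) - (s : ℝ)) * c =
      (∑ i : Fin d, if s ≤ (i : ℕ) ∧ (i : ℕ) < r then lam i else 0) +
        (∑ i : Fin k, if s ≤ (i : ℕ) then a i else 0) ∧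
    MajorizedByPad (fun i : Fin (k - s) => a ⟨s + (i : ℕ), by have := i.isLt; omega⟩)
      (fun i : Fin (d - s) =>
        if s + (i : ℕ) < r then c - lam ⟨s + (i : ℕ), by have := i.isLt; omega⟩ else 0)

/-!
Let `λ` and `μ` be the eigenvalues of `S₀` (increasing) and of `S_G` (decreasing). Karamata's and
Lidskii's inequalities give `∑ f (λ i + μ i) ≤ P_f(F)`, and the Schur–Horn theorem for frames says
that `a ≺ μ`, and that conversely every `μ' ≥ 0` with `a ≺ μ'` is realized by vectors of squared
norms `a` whose frame operator is diagonal in an eigenbasis of `S₀`, increasingly ordered.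

Suppose `F` is a minimizer and `a₁ + ⋯ + a_s < μ₁ + ⋯ + μ_s` at a block boundary `s`. Moving a
small amount from `μ_s` to `μ_{s+1}` preserves `a ≺ μ`, and since `λ + μ` drops at `s` it lowers
`∑ f (λ i + μ i)`: a contradiction. So the partial sums of `a` and `μ` agree at
`s_0, …, s_{p-1}`, and elsewhere those of `a` are at most those of `μ`. Therefore the initial
averages `P_{s_j+1,r}` are at most the averages of `λ + μ` over the same window, with equality for
`r = s_{j+1}`, and the latter are at most `c_{j+1}`, strictly once `r > s_{j+1}`.
-/

section PrefixSum

variable {k m : ℕ}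

/-- The sum of the first `r` coordinates of `x`, that is of all of them if `k ≤ r`. It expresses
the left-hand sides of the majorization inequalities. -/
def prefixSum (x : Fin k → ℝ) (r : ℕ) : ℝ := ∑ i with i.val < r, x i

@[simp]
lemma prefixSum_zero (x : Fin k → ℝ) : prefixSum x 0 = 0 := by simp [prefixSum]

lemma prefixSum_of_le (x : Fin k → ℝ) {r : ℕ} (hr : k ≤ r) : prefixSum x r = ∑ i, x i := by
  simp only [prefixSum, fun i : Fin k => i.2.trans_le hr, filter_true]

lemma prefixSum_sub (x y : Fin k → ℝ) (r : ℕ) :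
    prefixSum (x - y) r = prefixSum x r - prefixSum y r :=
  sum_sub_distrib ..

lemma prefixSum_eq_sum_range (x : Fin k → ℝ) (r : ℕ) :
    prefixSum x r = ∑ i ∈ range r, if h : i < k then x ⟨i, h⟩ else 0 := by
  refine sum_of_injOn Fin.val Fin.val_injective.injOn (fun i hi => by simpa using hi)
    (fun i hir hi => dif_neg fun hik => hi ⟨⟨i, hik⟩, by simpa using hir, rfl⟩) (by simp)

lemma prefixSum_pad (x : Fin k → ℝ) (hx : ∀ i : Fin k, m ≤ i → x i = 0) (r : ℕ) :
    prefixSum (pad x m) r = prefixSum x r := by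
  simp only [prefixSum_eq_sum_range, pad]
  refine sum_congr rfl fun i _ => ?_
  split_ifs with him hik hik
  · rfl
  · rfl
  · exact (hx _ (not_lt.mp him)).symm
  · rfl

/-- The vector obtained from `y` by moving the amount `δ` from coordinate `i` to coordinate `j`:
for `0 ≤ δ ≤ y i - y j` this is a Robin Hood transfer. -/
def transfer {ι : Type*} [DecidableEq ι] (y : ι → ℝ) (i j : ι) (δ : ℝ) : ι → ℝ :=
  y - Pi.single i δ + Pi.single j δ

section Transfer

variable {ι : Type*} [DecidableEq ι] (y : ι → ℝ) {i j l : ι} (δ : ℝ)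

lemma transfer_source (hij : i ≠ j) : transfer y i j δ i = y i - δ := by
  simp [transfer, hij]

lemma transfer_target (hij : i ≠ j) : transfer y i j δ j = y j + δ := by
  simp [transfer, hij]

lemma transfer_of_ne (hi : l ≠ i) (hj : l ≠ j) : transfer y i j δ l = y l := by
  simp [transfer, hi, hj]

lemma forall_transfer {p : ι → ℝ → Prop} (hij : i ≠ j) (hi : p i (y i - δ)) (hj : p j (y j + δ))
    (hy : ∀ l, p l (y l)) (l : ι) : p l (transfer y i j δ l) := by
  rcases eq_or_ne l i with rfl | hli
  · rwa [transfer_source y δ hij]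
  rcases eq_or_ne l j with rfl | hlj
  · rwa [transfer_target y δ hij]
  · rw [transfer_of_ne y δ hli hlj]; exact hy l

lemma sum_transfer_sub_sum [Fintype ι] {M : Type*} [AddCommGroup M] (F : ι → ℝ → M) (hij : i ≠ j) :
    ∑ l, F l (transfer y i j δ l) - ∑ l, F l (y l) =
      (F i (y i - δ) - F i (y i)) + (F j (y j + δ) - F j (y j)) := by
  rw [← sum_sub_distrib, Fintype.sum_eq_add i j hij, transfer_source y δ hij,
    transfer_target y δ hij]
  rintro l ⟨hli, hlj⟩
  rw [transfer_of_ne y δ hli hlj, sub_self]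

lemma sum_transfer [Fintype ι] (i j : ι) : ∑ l, transfer y i j δ l = ∑ l, y l := by
  simp [transfer, sum_add_distrib]

end Transfer

lemma prefixSum_transfer (y : Fin k → ℝ) (i j : Fin k) (δ : ℝ) (r : ℕ) :
    prefixSum (transfer y i j δ) r =
      prefixSum y r - (if i < r then δ else 0) + (if j < r then δ else 0) := by
  simp [prefixSum, transfer, sum_add_distrib, sum_sub_distrib, Pi.single_apply, sum_ite_eq']

/-- Majorization `x ≺ y` with the prefix sums of the given vectors, not of their decreasing
rearrangements; the lengths may differ, the shorter vector being understood as padded by zeros.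
For decreasing nonnegative vectors this is the usual majorization relation. -/
structure PrefixMajorizedBy (x : Fin k → ℝ) (y : Fin m → ℝ) : Prop where
  prefixSum_le : ∀ r, prefixSum x r ≤ prefixSum y r
  sum_eq : ∑ i, x i = ∑ i, y i

namespace PrefixMajorizedBy

lemma transfer_right {x : Fin k → ℝ} {y : Fin m → ℝ} (h : PrefixMajorizedBy x y) {j l : Fin m}
    (hjl : j < l) {δ : ℝ} (hδ : ∀ r : ℕ, j < r → r ≤ l → prefixSum x r + δ ≤ prefixSum y r) :
    PrefixMajorizedBy x (transfer y j l δ) where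
  prefixSum_le r := by
    have hle := h.prefixSum_le r
    rw [prefixSum_transfer]
    rcases le_or_gt r j with hrj | hjr
    · simpa [hrj.not_gt, (hrj.trans hjl.le).not_gt] using hle
    rcases le_or_gt r l with hrl | hlr
    · simpa [hjr, hrl.not_gt, le_sub_iff_add_le] using hδ r hjr hrl
    · simpa [hjr, hlr] using hle
  sum_eq := h.sum_eq.trans (sum_transfer y δ j l).symm

lemma eq_zero_of_le {x : Fin k → ℝ} {y : Fin m → ℝ} (h : PrefixMajorizedBy x y)
    (hy : ∀ i, 0 ≤ y i) {i : Fin m} (hi : k ≤ i) : y i = 0 := by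
  by_contra hne
  refine (h.prefixSum_le k).not_gt ?_
  rw [prefixSum_of_le x le_rfl, h.sum_eq]
  exact sum_lt_sum_of_subset (filter_subset ..) (mem_univ i) (by simpa using hi)
    ((hy i).lt_of_ne' hne) fun j _ _ => hy j

lemma pad_right {x : Fin k → ℝ} {y : Fin m → ℝ} (h : PrefixMajorizedBy x y)
    (hy : ∀ i : Fin m, k ≤ i → y i = 0) : PrefixMajorizedBy x (pad y k) where
  prefixSum_le r := by rw [prefixSum_pad y hy]; exact h.prefixSum_le r
  sum_eq := by
    rw [h.sum_eq, ← prefixSum_of_le y (le_max_right k m), ← prefixSum_pad y hy,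
      prefixSum_of_le _ (le_max_left k m)]

lemma exists_excess_before_deficit {x y : Fin k → ℝ} (h : PrefixMajorizedBy x y) (hne : x ≠ y) :
    ∃ j l, j < l ∧ x j < y j ∧ y l < x l ∧ ∀ i < l, x i ≤ y i := by
  have hdeficit : ∃ l, y l < x l := by
    by_contra! hle
    exact hne (funext fun i => (sum_eq_sum_iff_of_le fun i _ => hle i).mp h.sum_eq i (mem_univ i))
  obtain ⟨l, hl, hmin⟩ := exists_minimal_of_wellFoundedLT (fun l => y l < x l) hdeficit
  have hbefore : ∀ i < l, x i ≤ y i := fun i hi => not_lt.mp fun hlt => (hmin hlt hi.le).not_gt hi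
  obtain ⟨j, hjl, hj⟩ : ∃ j < l, x j < y j := by
    by_contra! hle
    refine (h.prefixSum_le (l + 1)).not_gt (sum_lt_sum (fun i hi => ?_) ⟨l, by simp, hl⟩)
    rcases (Nat.lt_succ_iff.mp (mem_filter.mp hi).2).eq_or_lt with hil | hil
    · exact Fin.ext hil ▸ hl.le
    · exact hle i hil
  exact ⟨j, l, hjl, hj, hl, hbefore⟩

end PrefixMajorizedBy

lemma card_ne_transfer_lt {ι : Type*} [Fintype ι] [DecidableEq ι] {x y : ι → ℝ} {j l : ι}
    (hjl : j ≠ l) (hj : x j ≠ y j) (hl : x l ≠ y l) :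
    #{i | x i ≠ transfer y j l (min (y j - x j) (x l - y l)) i} < #{i | x i ≠ y i} := by
  refine card_lt_card ((ssubset_iff_of_subset fun i hi => ?_).mpr ?_)
  · rw [mem_filter_univ] at hi ⊢
    rcases eq_or_ne i j with rfl | hij
    · exact hj
    rcases eq_or_ne i l with rfl | hil
    · exact hl
    · rwa [transfer_of_ne y _ hij hil] at hi
  · rcases min_choice (y j - x j) (x l - y l) with hδ | hδ <;> rw [hδ]
    · exact ⟨j, by simpa using hj, by simp [transfer_source y _ hjl]⟩
    · exact ⟨l, by simpa using hl, by simp [transfer_target y _ hjl]⟩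

-- Each step corrects one coordinate of `y`, so finitely many steps lead from `y` to `x`.
theorem PrefixMajorizedBy.transfer_induction {x y : Fin k → ℝ} (hxy : PrefixMajorizedBy x y)
    (hx : Antitone x) {P : (Fin k → ℝ) → Prop} (base : P y)
    (step : ∀ z i j δ, i ≠ j → 0 ≤ δ → δ ≤ z i - z j → P z → P (transfer z i j δ)) : P x := by
  induction hN : #{i | x i ≠ y i} using Nat.strong_induction_on generalizing y with
  | _ N ih =>
    by_cases hne : x = y
    · exact hne ▸ base
    obtain ⟨j, l, hjl, hj, hl, hbefore⟩ := hxy.exists_excess_before_deficit hne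
    have hxjl := hx hjl.le
    have hδj := min_le_left (y j - x j) (x l - y l)
    refine ih _ (hN ▸ card_ne_transfer_lt hjl.ne hj.ne hl.ne') (hxy.transfer_right hjl ?_)
      (step y j l _ hjl.ne (le_min (by linarith) (by linarith)) (by linarith) base) rfl
    intro r hjr hrl
    have hexcess : y j - x j ≤ prefixSum (y - x) r :=
      single_le_sum (f := y - x) (fun i hi => sub_nonneg.mpr (hbefore i
        (Fin.lt_def.mpr ((mem_filter.mp hi).2.trans_le hrl)))) (by simpa using hjr)
    rw [prefixSum_sub] at hexcess
    linarith

end PrefixSum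

section Convexity

variable {f : ℝ → ℝ} {t : Set ℝ} {p q δ : ℝ}

lemma weight_mul_add_sub (hpq : p ≠ q) :
    (1 - δ / (p - q)) * p + δ / (p - q) * q = p - δ := by
  have := sub_ne_zero.mpr hpq
  field_simp
  ring

lemma weight_mul_add_add (hpq : p ≠ q) :
    δ / (p - q) * p + (1 - δ / (p - q)) * q = q + δ := by
  have := sub_ne_zero.mpr hpq
  field_simp
  ring

lemma map_sub_add_map_add_lt_of_strictConvexOn (hf : StrictConvexOn ℝ t f) (hp : p ∈ t)
    (hq : q ∈ t) (h0 : 0 < δ) (h1 : δ < p - q) : f (p - δ) + f (q + δ) < f p + f q := by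
  have hpq : p ≠ q := fun h => by linarith
  have hw0 : 0 < δ / (p - q) := div_pos h0 (h0.trans h1)
  have hw1 : 0 < 1 - δ / (p - q) := sub_pos.mpr ((div_lt_one (h0.trans h1)).mpr h1)
  have hsub := hf.2 hp hq hpq hw1 hw0 (by ring)
  have hadd := hf.2 hp hq hpq hw0 hw1 (by ring)
  simp only [smul_eq_mul, weight_mul_add_sub hpq, weight_mul_add_add hpq] at hsub hadd
  linarith

lemma map_sub_add_map_add_le_of_convexOn (hf : ConvexOn ℝ t f) (hp : p ∈ t)
    (hq : q ∈ t) (h0 : 0 ≤ δ) (h1 : δ ≤ p - q) : f (p - δ) + f (q + δ) ≤ f p + f q := by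
  rcases eq_or_ne p q with rfl | hpq
  · obtain rfl : δ = 0 := by linarith
    simp
  have hw0 : 0 ≤ δ / (p - q) := div_nonneg h0 (h0.trans h1)
  have hw1 : 0 ≤ 1 - δ / (p - q) := sub_nonneg.mpr (div_le_one_of_le₀ h1 (h0.trans h1))
  have hsub := hf.2 hp hq hw1 hw0 (by ring)
  have hadd := hf.2 hp hq hw0 hw1 (by ring)
  simp only [smul_eq_mul, weight_mul_add_sub hpq, weight_mul_add_add hpq] at hsub hadd
  linarith

variable {n : ℕ} {x y : Fin n → ℝ}

-- Karamata's inequality.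
theorem PrefixMajorizedBy.sum_map_le_sum_map (hxy : PrefixMajorizedBy x y) (hx : Antitone x)
    (hf : ConvexOn ℝ t f) (hy : ∀ i, y i ∈ t) : ∑ i, f (x i) ≤ ∑ i, f (y i) := by
  refine (hxy.transfer_induction hx (P := fun z => (∀ i, z i ∈ t) ∧ ∑ i, f (z i) ≤ ∑ i, f (y i))
    ⟨hy, le_rfl⟩ ?_).2
  rintro z i j δ hij h0 h1 ⟨hz, hzy⟩
  have hseg {r : ℝ} (h : r ∈ Set.Icc (z j) (z i)) : r ∈ t := hf.1.ordConnected.out (hz j) (hz i) h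
  refine ⟨forall_transfer z δ (p := fun _ r => r ∈ t) hij (hseg ⟨by linarith, by linarith⟩)
    (hseg ⟨by linarith, by linarith⟩) hz, ?_⟩
  have htransfer := sum_transfer_sub_sum z δ (fun _ => f) hij
  have hconvex := map_sub_add_map_add_le_of_convexOn hf (hz i) (hz j) h0 h1
  linarith

-- The hinge functions `s ↦ max (s - t) 0` suffice to test for majorization: take `t = y r`.
lemma PrefixMajorizedBy.of_sum_max_le (hy : Antitone y)
    (hmax : ∀ t, ∑ i, max (x i - t) 0 ≤ ∑ i, max (y i - t) 0) (hsum : ∑ i, x i = ∑ i, y i) :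
    PrefixMajorizedBy x y := by
  refine ⟨fun r => ?_, hsum⟩
  rcases le_or_gt n r with hr | hr
  · rw [prefixSum_of_le x hr, prefixSum_of_le y hr, hsum]
  let s : Fin n → ℝ := fun _ => y ⟨r, hr⟩
  have hx_le : prefixSum (x - s) r ≤ ∑ i, max ((x - s) i) 0 :=
    (sum_le_sum fun i _ => le_max_left ..).trans
      (sum_le_univ_sum_of_nonneg fun i => le_max_right ..)
  have hy_eq : ∑ i, max ((y - s) i) 0 = prefixSum (y - s) r := by
    rw [prefixSum, sum_filter]
    refine sum_congr rfl fun i _ => ?_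
    split_ifs with hi
    · exact max_eq_left (sub_nonneg.mpr (hy (Fin.le_def.mpr hi.le)))
    · exact max_eq_right (sub_nonpos.mpr (hy (Fin.le_def.mpr (not_lt.mp hi))))
  have hle := hx_le.trans ((hmax _).trans_eq hy_eq)
  rw [prefixSum_sub, prefixSum_sub] at hle
  exact (sub_le_sub_iff_right _).mp hle

lemma antitone_sortDesc (x : Fin n → ℝ) : Antitone (sortDesc x) :=
  fun _ _ hij => Tuple.monotone_sort x (Fin.rev_le_rev.mpr hij)

lemma exists_perm_sortDesc (x : Fin n → ℝ) : ∃ σ : Equiv.Perm (Fin n), sortDesc x = x ∘ σ :=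
  ⟨Fin.revPerm.trans (Tuple.sort x), rfl⟩

lemma sum_comp_sortDesc (x : Fin n → ℝ) (F : ℝ → ℝ) : ∑ i, F (sortDesc x i) = ∑ i, F (x i) := by
  obtain ⟨σ, hσ⟩ := exists_perm_sortDesc x
  rw [hσ]
  exact Equiv.sum_comp σ (F ∘ x)

theorem sum_map_le_sum_map_of_sum_max_le (hf : ConvexOn ℝ t f) (hy : Antitone y)
    (hyt : ∀ i, y i ∈ t) (hmax : ∀ s, ∑ i, max (x i - s) 0 ≤ ∑ i, max (y i - s) 0)
    (hsum : ∑ i, x i = ∑ i, y i) : ∑ i, f (x i) ≤ ∑ i, f (y i) := by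
  rw [← sum_comp_sortDesc x f]
  refine PrefixMajorizedBy.sum_map_le_sum_map (.of_sum_max_le hy (fun s => ?_) ?_)
    (antitone_sortDesc x) hf hyt
  · exact (sum_comp_sortDesc x (max (· - s) 0)).trans_le (hmax s)
  · exact (sum_comp_sortDesc x id).trans hsum

end Convexity

section Eigenbasis

variable {𝕜 E ι : Type*} [RCLike 𝕜] [NormedAddCommGroup E] [InnerProductSpace 𝕜 E] [Fintype ι]
  {A B : E →ₗ[𝕜] E} {u v : OrthonormalBasis ι 𝕜 E} {α β : ι → ℝ}

/-- The orthonormal basis `u` consists of eigenvectors of `A`, with real eigenvalues `α` listed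
in the order of the basis. -/
def IsEigenbasis (A : E →ₗ[𝕜] E) (u : OrthonormalBasis ι 𝕜 E) (α : ι → ℝ) : Prop :=
  ∀ i, A (u i) = (α i : 𝕜) • u i

lemma exists_isEigenbasis (u : OrthonormalBasis ι 𝕜 E) (α : ι → ℝ) :
    ∃ A, IsEigenbasis A u α :=
  ⟨u.toBasis.constr 𝕜 fun i => (α i : 𝕜) • u i, fun i => by
    simpa using u.toBasis.constr_basis 𝕜 (fun i => (α i : 𝕜) • u i) i⟩

lemma isEigenbasis_smul_one (u : OrthonormalBasis ι 𝕜 E) (t : ℝ) :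
    IsEigenbasis ((t : 𝕜) • 1) u (fun _ => t) := fun _ => rfl

namespace IsEigenbasis

lemma add (hA : IsEigenbasis A u α) (hB : IsEigenbasis B u β) : IsEigenbasis (A + B) u (α + β) :=
  fun i => by simp [hA i, hB i, add_smul]

lemma neg (hA : IsEigenbasis A u α) : IsEigenbasis (-A) u (-α) := fun i => by simp [hA i]

lemma sub (hA : IsEigenbasis A u α) (hB : IsEigenbasis B u β) : IsEigenbasis (A - B) u (α - β) :=
  fun i => by simp [hA i, hB i, sub_smul]

lemma reindex {κ : Type*} [Fintype κ] (hA : IsEigenbasis A u α) (e : ι ≃ κ) :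
    IsEigenbasis A (u.reindex e) (α ∘ e.symm) := fun i => by simpa using hA (e.symm i)

lemma inner_basis_apply (hA : IsEigenbasis A u α) (i : ι) (x : E) :
    inner 𝕜 (u i) (A x) = α i * inner 𝕜 (u i) x := by
  classical
  nth_rw 1 [← u.sum_repr' x]
  simp [hA _, inner_sum, inner_smul_right, u.inner_eq_ite, mul_comm]

lemma isSymmetric (hA : IsEigenbasis A u α) : A.IsSymmetric := fun x y => by
  rw [← u.sum_inner_mul_inner, ← u.sum_inner_mul_inner]
  refine sum_congr rfl fun i _ => ?_
  rw [← inner_conj_symm, hA.inner_basis_apply, hA.inner_basis_apply, map_mul, RCLike.conj_ofReal,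
    inner_conj_symm, mul_left_comm, mul_assoc]

lemma re_inner_apply_self (hA : IsEigenbasis A u α) (x : E) :
    RCLike.re (inner 𝕜 x (A x)) = ∑ i, α i * ‖inner 𝕜 (u i) x‖ ^ 2 := by
  rw [← u.sum_inner_mul_inner, map_sum]
  refine sum_congr rfl fun i _ => ?_
  rw [hA.inner_basis_apply, mul_left_comm, RCLike.re_ofReal_mul, inner_mul_symm_re_eq_norm,
    norm_mul, norm_inner_symm, sq]

lemma isPositive (hA : IsEigenbasis A u α) (hα : ∀ i, 0 ≤ α i) : A.IsPositive := by
  refine ⟨hA.isSymmetric, fun x => ?_⟩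
  rw [hA.isSymmetric x x, hA.re_inner_apply_self]
  exact sum_nonneg fun i _ => mul_nonneg (hα i) (sq_nonneg _)

lemma eigenvalue_nonneg (hA : IsEigenbasis A u α) (hpos : A.IsPositive) (i : ι) : 0 ≤ α i := by
  simpa [hA i, inner_smul_right, u.orthonormal.1 i] using hpos.re_inner_nonneg_right (u i)

lemma trace_eq (hA : IsEigenbasis A u α) : LinearMap.trace 𝕜 E A = (∑ i, α i : ℝ) := by
  simp [LinearMap.trace_eq_sum_inner A u, hA _, inner_smul_right, u.orthonormal.1 _]

end IsEigenbasis

lemma exists_antitone_isEigenbasis {d : ℕ} (b : OrthonormalBasis (Fin d) 𝕜 E)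
    (hA : A.IsSymmetric) :
    ∃ (u : OrthonormalBasis (Fin d) 𝕜 E) (α : Fin d → ℝ), IsEigenbasis A u α ∧ Antitone α := by
  have := b.toBasis.finiteDimensional_of_finite
  have hd : Module.finrank 𝕜 E = d := by simp [Module.finrank_eq_card_basis b.toBasis]
  exact ⟨hA.eigenvectorBasis hd, hA.eigenvalues hd, hA.apply_eigenvectorBasis hd,
    hA.eigenvalues_antitone hd⟩

lemma exists_ne_zero_inner_eq_zero {κ : Type*} [Fintype κ] [FiniteDimensional 𝕜 E] (w : κ → E)
    (hcard : Fintype.card κ < Module.finrank 𝕜 E) : ∃ x ≠ 0, ∀ l, inner 𝕜 (w l) x = 0 := by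
  let L : E →ₗ[𝕜] κ → 𝕜 := LinearMap.pi fun l => innerₛₗ 𝕜 (w l)
  have hker : L.ker ≠ ⊥ := LinearMap.ker_ne_bot_of_finrank_lt (by simpa using hcard)
  obtain ⟨x, hx, hx0⟩ := Submodule.exists_mem_ne_zero_of_ne_bot hker
  exact ⟨x, hx0, fun l => congrFun (LinearMap.mem_ker.mp hx) l⟩

namespace IsEigenbasis

variable [LinearOrder ι]

-- One half of the Courant–Fischer theorem: orthogonality to the `z l` with `l < m` and to the
-- `u l` with `m < l` imposes fewer conditions than the dimension.
lemma exists_le_re_inner_apply_self (hA : IsEigenbasis A u α) (hα : Antitone α) (z : ι → E)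
    (m : ι) : ∃ x ≠ 0, (∀ l < m, inner 𝕜 (z l) x = 0) ∧
      α m * ‖x‖ ^ 2 ≤ RCLike.re (inner 𝕜 x (A x)) := by
  have := u.toBasis.finiteDimensional_of_finite
  obtain ⟨x, hx0, hx⟩ := exists_ne_zero_inner_eq_zero (𝕜 := 𝕜)
    (fun l : {l // l ≠ m} => if l < m then z l else u l)
    (by simpa [Module.finrank_eq_card_basis u.toBasis] using Fintype.card_pos_iff.mpr ⟨m⟩)
  refine ⟨x, hx0, fun l hl => by simpa [hl] using hx ⟨l, hl.ne⟩, ?_⟩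
  rw [hA.re_inner_apply_self, ← u.sum_sq_norm_inner_right x, mul_sum]
  refine sum_le_sum fun i _ => ?_
  rcases le_or_gt i m with hi | hi
  · exact mul_le_mul_of_nonneg_right (hα hi) (sq_nonneg _)
  · have : inner 𝕜 (u i) x = 0 := by simpa [hi.not_gt] using hx ⟨i, hi.ne'⟩
    simp [this]

lemma re_inner_apply_self_le (hA : IsEigenbasis A u α) (hα : Antitone α) {m : ι} {x : E}
    (hx : ∀ l < m, inner 𝕜 (u l) x = 0) :
    RCLike.re (inner 𝕜 x (A x)) ≤ α m * ‖x‖ ^ 2 := by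
  rw [hA.re_inner_apply_self, ← u.sum_sq_norm_inner_right x, mul_sum]
  refine sum_le_sum fun i _ => ?_
  rcases lt_or_ge i m with hi | hi
  · simp [hx i hi]
  · exact mul_le_mul_of_nonneg_right (hα hi) (sq_nonneg _)

-- Weyl's monotonicity principle.
lemma eigenvalues_le_of_le (hA : IsEigenbasis A u α) (hB : IsEigenbasis B v β) (hα : Antitone α)
    (hβ : Antitone β) (hAB : A ≤ B) (m : ι) : α m ≤ β m := by
  obtain ⟨x, hx0, hvx, hAx⟩ := hA.exists_le_re_inner_apply_self hα v m
  have hABx : RCLike.re (inner 𝕜 x (A x)) ≤ RCLike.re (inner 𝕜 x (B x)) := by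
    simpa [inner_sub_right] using ((LinearMap.le_def A B).mp hAB).re_inner_nonneg_right x
  exact le_of_mul_le_mul_right (hAx.trans (hABx.trans (hB.re_inner_apply_self_le hβ hvx)))
    (by positivity)

lemma eigenvalues_eq_of_antitone (hu : IsEigenbasis A u α) (hv : IsEigenbasis A v β)
    (hα : Antitone α) (hβ : Antitone β) : α = β :=
  funext fun m => (hu.eigenvalues_le_of_le hv hα hβ le_rfl m).antisymm
    (hv.eigenvalues_le_of_le hu hβ hα le_rfl m)

end IsEigenbasis

variable {d : ℕ} {u v w : OrthonormalBasis (Fin d) 𝕜 E} {lam μ y : Fin d → ℝ} {t : ℝ}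

-- The positive part `N` of `A + B - t` satisfies `-A ≤ N - A` and `B - t ≤ N - A`, so that Weyl's
-- principle bounds `max (-lam i) (μ i - t)` by the `i`-th eigenvalue of `N - A`.
lemma sum_max_add_eigenvalues_le (hA : IsEigenbasis A u lam) (hB : IsEigenbasis B v μ)
    (hAB : IsEigenbasis (A + B) w y) (hlam : Monotone lam) (hμ : Antitone μ) (t : ℝ) :
    ∑ i, max (lam i + μ i - t) 0 ≤ ∑ i, max (y i - t) 0 := by
  obtain ⟨N, hN⟩ := exists_isEigenbasis w fun i => max (y i - t) 0
  obtain ⟨z, ν, hNA, hν⟩ := exists_antitone_isEigenbasis w (hN.isSymmetric.sub hA.isSymmetric)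
  have hneg : -A ≤ N - A := by
    rw [LinearMap.le_def, sub_neg_eq_add, sub_add_cancel]
    exact hN.isPositive fun i => le_max_right ..
  have hshift : B - (t : 𝕜) • 1 ≤ N - A := by
    have : N - A - (B - (t : 𝕜) • 1) = N - (A + B - (t : 𝕜) • 1) := by abel
    rw [LinearMap.le_def, this]
    exact (hN.sub (hAB.sub (isEigenbasis_smul_one w t))).isPositive
      fun i => sub_nonneg.mpr (le_max_left ..)
  have hlamν : ∀ i, -lam i ≤ ν i := hA.neg.eigenvalues_le_of_le hNA hlam.neg hν hneg
  have hμν : ∀ i, μ i - t ≤ ν i := (hB.sub (isEigenbasis_smul_one v t)).eigenvalues_le_of_le hNA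
    (fun i j hij => sub_le_sub_right (hμ hij) t) hν hshift
  have htrace : ∑ i, ν i = ∑ i, max (y i - t) 0 - ∑ i, lam i := by
    have := hNA.trace_eq
    rw [map_sub, hN.trace_eq, hA.trace_eq] at this
    exact_mod_cast this.symm
  calc ∑ i, max (lam i + μ i - t) 0
      ≤ ∑ i, (ν i + lam i) := sum_le_sum fun i _ =>
        max_le (by linarith [hμν i]) (by linarith [hlamν i])
    _ = ∑ i, max (y i - t) 0 := by rw [sum_add_distrib, htrace, sub_add_cancel]

-- Lidskii's theorem, in the form of the inequalities for convex functions.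
theorem sum_map_add_eigenvalues_le {f : ℝ → ℝ} {s : Set ℝ} (hf : ConvexOn ℝ s f)
    (hA : IsEigenbasis A u lam) (hB : IsEigenbasis B v μ) (hAB : IsEigenbasis (A + B) w y)
    (hlam : Monotone lam) (hμ : Antitone μ) (hy : Antitone y) (hys : ∀ i, y i ∈ s) :
    ∑ i, f (lam i + μ i) ≤ ∑ i, f (y i) := by
  refine sum_map_le_sum_map_of_sum_max_le hf hy hys
    (sum_max_add_eigenvalues_le hA hB hAB hlam hμ) ?_
  have htrace := hAB.trace_eq
  rw [map_add, hA.trace_eq, hB.trace_eq] at htrace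
  rw [sum_add_distrib]
  exact_mod_cast htrace

end Eigenbasis

section FrameOperator

open InnerProductSpace (rankOne rankOne_apply)

variable (𝕜 : Type*) {E κ : Type*} [RCLike 𝕜] [NormedAddCommGroup E] [InnerProductSpace 𝕜 E]
  [Fintype κ]

/-- The frame operator `∑ g_i g_i^*` of a finite family of vectors in an inner product space. -/
noncomputable def frameOperator (g : κ → E) : E →ₗ[𝕜] E :=
  ∑ i, (rankOne 𝕜 (g i) (g i)).toLinearMap

variable {𝕜} (g : κ → E)

lemma frameOperator_apply (x : E) : frameOperator 𝕜 g x = ∑ i, inner 𝕜 (g i) x • g i := by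
  simp [frameOperator]

lemma re_inner_frameOperator_apply_self (x : E) :
    RCLike.re (inner 𝕜 x (frameOperator 𝕜 g x)) = ∑ i, ‖inner 𝕜 (g i) x‖ ^ 2 := by
  rw [frameOperator_apply, inner_sum, map_sum]
  refine sum_congr rfl fun i _ => ?_
  rw [inner_smul_right, inner_mul_symm_re_eq_norm, norm_mul, norm_inner_symm x, sq]

lemma isPositive_frameOperator : (frameOperator 𝕜 g).IsPositive :=
  LinearMap.isPositive_sum _ fun i _ =>
    (InnerProductSpace.isPositive_rankOne_self (g i)).toLinearMap

lemma trace_frameOperator [FiniteDimensional 𝕜 E] :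
    LinearMap.trace 𝕜 E (frameOperator 𝕜 g) = (∑ i, ‖g i‖ ^ 2 : ℝ) := by
  simp [frameOperator, InnerProductSpace.trace_rankOne, inner_self_eq_norm_sq_to_K]

lemma frameOperator_subtype_le (p : κ → Prop) [DecidablePred p] :
    frameOperator 𝕜 (fun i : {i // p i} => g i) ≤ frameOperator 𝕜 g := by
  have hsplit : frameOperator 𝕜 (fun i : {i // p i} => g i) +
      frameOperator 𝕜 (fun i : {i // ¬p i} => g i) = frameOperator 𝕜 g :=
    Fintype.sum_subtype_add_sum_subtype p fun i => (rankOne 𝕜 (g i) (g i)).toLinearMap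
  rw [LinearMap.le_def, sub_eq_of_eq_add' hsplit.symm]
  exact isPositive_frameOperator _

variable {g} {d k : ℕ} {u v : OrthonormalBasis (Fin d) 𝕜 E} {μ : Fin d → ℝ}

lemma sum_sq_norm_eq_sum_eigenvalues (hμ : IsEigenbasis (frameOperator 𝕜 g) u μ) :
    ∑ i, ‖g i‖ ^ 2 = ∑ i, μ i := by
  have := u.toBasis.finiteDimensional_of_finite
  exact_mod_cast (trace_frameOperator g).symm.trans hμ.trace_eq

lemma eigenvalue_frameOperator_nonpos (hu : IsEigenbasis (frameOperator 𝕜 g) u μ) (hμ : Antitone μ)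
    {m : Fin d} (hm : Fintype.card κ ≤ m) : μ m ≤ 0 := by
  let e := Fintype.equivFin κ
  obtain ⟨x, hx0, hx, hle⟩ := hu.exists_le_re_inner_apply_self hμ
    (fun l => if h : l < Fintype.card κ then g (e.symm ⟨l, h⟩) else 0) m
  have hgx (i : κ) : inner 𝕜 (g i) x = 0 := by
    simpa using hx ⟨e i, by lia⟩ (Fin.lt_def.mpr ((e i).2.trans_le hm))
  simp only [re_inner_frameOperator_apply_self, hgx, norm_zero] at hle
  exact nonpos_of_mul_nonpos_left (by simpa using hle) (by positivity)

-- The easy half of the Schur–Horn theorem: the first `r` vectors contribute an operator below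
-- the whole frame operator, with at most `r` positive eigenvalues.
theorem prefixMajorizedBy_eigenvalues {g : Fin k → E} (hu : IsEigenbasis (frameOperator 𝕜 g) u μ)
    (hμ : Antitone μ) : PrefixMajorizedBy (fun i => ‖g i‖ ^ 2) μ where
  sum_eq := sum_sq_norm_eq_sum_eigenvalues hu
  prefixSum_le r := by
    let g' : {i : Fin k // i < r} → E := fun i => g i
    obtain ⟨v, τ, hv, hτ⟩ :=
      exists_antitone_isEigenbasis u (isPositive_frameOperator (𝕜 := 𝕜) g').isSymmetric
    have hτμ := hv.eigenvalues_le_of_le hu hτ hμ (frameOperator_subtype_le g _)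
    have hcard : Fintype.card {i : Fin k // i < r} ≤ r := by
      simp [Fintype.card_subtype, Fin.card_filter_val_lt]
    calc prefixSum (fun i => ‖g i‖ ^ 2) r
        = ∑ i, ‖g' i‖ ^ 2 := sum_subtype _ (fun i => by simp) _
      _ = ∑ i, τ i := sum_sq_norm_eq_sum_eigenvalues hv
      _ ≤ ∑ i : Fin d, if i < r then μ i else 0 := sum_le_sum fun i _ => by
          split_ifs with hi
          · exact hτμ i
          · exact eigenvalue_frameOperator_nonpos hv hτ (hcard.trans (not_lt.mp hi))
      _ = prefixSum μ r := (sum_filter ..).symm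

lemma rankOne_add_rankOne_rotation (x y : E) {c s : ℝ} (hcs : c ^ 2 + s ^ 2 = 1) :
    rankOne 𝕜 ((c : 𝕜) • x + (s : 𝕜) • y) ((c : 𝕜) • x + (s : 𝕜) • y) +
        rankOne 𝕜 (-(s : 𝕜) • x + (c : 𝕜) • y) (-(s : 𝕜) • x + (c : 𝕜) • y) =
      rankOne 𝕜 x x + rankOne 𝕜 y y := by
  have hcs' : (c : 𝕜) ^ 2 + (s : 𝕜) ^ 2 = 1 := by exact_mod_cast hcs
  ext z
  simp only [add_apply, rankOne_apply, inner_add_left, inner_smul_left, map_neg,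
    RCLike.conj_ofReal]
  linear_combination (norm := module) hcs' • (inner 𝕜 x z • x + inner 𝕜 y z • y)

lemma exists_rankOne_add_rankOne_eq (x y : E) {b : ℝ} (hb : b ∈ Set.Icc (‖y‖ ^ 2) (‖x‖ ^ 2)) :
    ∃ p q : E, ‖p‖ ^ 2 = b ∧
      rankOne 𝕜 p p + rankOne 𝕜 q q = rankOne 𝕜 x x + rankOne 𝕜 y y := by
  let φ : ℝ → ℝ := fun θ => ‖(Real.cos θ : 𝕜) • x + (Real.sin θ : 𝕜) • y‖ ^ 2
  have hφ : Continuous φ := by fun_prop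
  have hφ0 : φ 0 = ‖x‖ ^ 2 := by simp [φ]
  have hφ1 : φ (Real.pi / 2) = ‖y‖ ^ 2 := by simp [φ]
  obtain ⟨θ, -, hθ⟩ := intermediate_value_Icc' Real.pi_div_two_pos.le hφ.continuousOn
    (hφ0.symm ▸ hφ1.symm ▸ hb)
  exact ⟨_, _, hθ, rankOne_add_rankOne_rotation x y (Real.cos_sq_add_sin_sq θ)⟩

lemma sq_norm_add_sq_norm_eq_of_rankOne_add_eq [FiniteDimensional 𝕜 E] {p q x y : E}
    (h : rankOne 𝕜 p p + rankOne 𝕜 q q = rankOne 𝕜 x x + rankOne 𝕜 y y) :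
    ‖p‖ ^ 2 + ‖q‖ ^ 2 = ‖x‖ ^ 2 + ‖y‖ ^ 2 := by
  have htrace := congrArg (fun T : E →L[𝕜] E => LinearMap.trace 𝕜 E T.toLinearMap) h
  simp only [ContinuousLinearMap.toLinearMap_add, map_add, InnerProductSpace.trace_rankOne,
    inner_self_eq_norm_sq_to_K] at htrace
  exact_mod_cast htrace

lemma exists_frameOperator_eq_transfer [FiniteDimensional 𝕜 E] [DecidableEq κ] (g : κ → E)
    {i j : κ} (hij : i ≠ j) {δ : ℝ} (h0 : 0 ≤ δ) (h1 : δ ≤ ‖g i‖ ^ 2 - ‖g j‖ ^ 2) :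
    ∃ g' : κ → E, (∀ l, ‖g' l‖ ^ 2 = transfer (fun l => ‖g l‖ ^ 2) i j δ l) ∧
      frameOperator 𝕜 g' = frameOperator 𝕜 g := by
  obtain ⟨p, q, hp, hpq⟩ := exists_rankOne_add_rankOne_eq (𝕜 := 𝕜) (g i) (g j)
    (b := ‖g i‖ ^ 2 - δ) ⟨by linarith, by linarith⟩
  have hq : ‖q‖ ^ 2 = ‖g j‖ ^ 2 + δ := by
    linarith [sq_norm_add_sq_norm_eq_of_rankOne_add_eq hpq]
  let g' := Function.update (Function.update g i p) j q
  have hi : g' i = p := by simp [g', hij]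
  have hj : g' j = q := by simp [g']
  have hne {l : κ} (hli : l ≠ i) (hlj : l ≠ j) : g' l = g l := by simp [g', hli, hlj]
  refine ⟨g', fun l => ?_, LinearMap.ext fun z => ?_⟩
  · rcases eq_or_ne l i with rfl | hli
    · rw [transfer_source _ _ hij, hi, hp]
    rcases eq_or_ne l j with rfl | hlj
    · rw [transfer_target _ _ hij, hj, hq]
    · rw [transfer_of_ne _ _ hli hlj, hne hli hlj]
  · rw [frameOperator_apply, frameOperator_apply, ← sub_eq_zero, ← sum_sub_distrib,
      Fintype.sum_eq_add i j hij fun l hl => by rw [hne hl.1 hl.2, sub_self], hi, hj,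
      sub_add_sub_comm, sub_eq_zero]
    exact DFunLike.congr_fun hpq z

lemma exists_isEigenbasis_frameOperator_pad (u : OrthonormalBasis (Fin d) 𝕜 E)
    (hμ : ∀ i, 0 ≤ μ i) (hk : ∀ i : Fin d, k ≤ i → μ i = 0) :
    ∃ g : Fin k → E, (∀ i, ‖g i‖ ^ 2 = pad μ k i) ∧ IsEigenbasis (frameOperator 𝕜 g) u μ := by
  let g : Fin k → E := fun i => if h : i < d then (√(μ ⟨i, h⟩) : 𝕜) • u ⟨i, h⟩ else 0
  have hne {i : Fin k} {l : Fin d} (hil : i.val ≠ l) : inner 𝕜 (g i) (u l) = 0 := by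
    by_cases h : i < d
    · simp [g, h, inner_smul_left, u.inner_eq_ite, Fin.ext_iff, hil]
    · simp [g, h]
  refine ⟨g, fun i => by by_cases h : i < d <;> simp [g, pad, h, norm_smul, hμ], fun l => ?_⟩
  rw [frameOperator_apply]
  rcases lt_or_ge l.val k with hl | hl
  · rw [Fintype.sum_eq_single ⟨l, hl⟩ fun i hi => by
      rw [hne (fun h => hi (Fin.ext h)), zero_smul]]
    simp [g, inner_smul_left, smul_smul, ← RCLike.ofReal_mul, Real.mul_self_sqrt (hμ l)]
  · simp [hk l hl, fun i : Fin k => hne (i.2.trans_le hl).ne]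

-- The hard half of the Schur–Horn theorem, for frames.
theorem exists_isEigenbasis_frameOperator {a : Fin k → ℝ} (u : OrthonormalBasis (Fin d) 𝕜 E)
    (hμ : ∀ i, 0 ≤ μ i) (ha : Antitone a) (h : PrefixMajorizedBy a μ) :
    ∃ g : Fin k → E, (∀ i, ‖g i‖ ^ 2 = a i) ∧ IsEigenbasis (frameOperator 𝕜 g) u μ := by
  have := u.toBasis.finiteDimensional_of_finite
  have hk (i : Fin d) (hki : k ≤ i) : μ i = 0 := h.eq_zero_of_le hμ hki
  refine (h.pad_right hk).transfer_induction ha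
    (P := fun b => ∃ g : Fin k → E, (∀ i, ‖g i‖ ^ 2 = b i) ∧ IsEigenbasis (frameOperator 𝕜 g) u μ)
    (exists_isEigenbasis_frameOperator_pad u hμ hk) ?_
  rintro b i j δ hij h0 h1 ⟨g, hgb, hg⟩
  obtain rfl : (fun l => ‖g l‖ ^ 2) = b := funext hgb
  obtain ⟨g', hg'b, hg'⟩ := exists_frameOperator_eq_transfer (𝕜 := 𝕜) g hij h0 h1
  exact ⟨g', hg'b, hg' ▸ hg⟩

end FrameOperator

section Matrix

variable {d n : ℕ} {S : Matrix (Fin d) (Fin d) ℂ}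

lemma normSqVec_eq_sq_norm (g : Fin d → ℂ) : normSqVec g = ‖WithLp.toLp 2 g‖ ^ 2 := by
  simp [normSqVec, EuclideanSpace.norm_sq_eq, Complex.normSq_eq_norm_sq]

lemma toEuclideanLin_frameOp (F : Fin n → Fin d → ℂ) :
    (frameOp F).toEuclideanLin = frameOperator ℂ fun i => WithLp.toLp 2 (F i) := by
  rw [frameOp, frameOperator, map_sum]
  exact sum_congr rfl fun i _ => ((LinearEquiv.symm_apply_eq _).mp
    (InnerProductSpace.symm_toEuclideanLin_rankOne ..)).symm

lemma posSemidef_frameOp (F : Fin n → Fin d → ℂ) : (frameOp F).PosSemidef :=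
  Matrix.posSemidef_sum _ fun i _ => Matrix.posSemidef_vecMulVec_self_star (F i)

lemma isEigenbasis_eigenvectorBasis (hS : S.IsHermitian) :
    IsEigenbasis S.toEuclideanLin hS.eigenvectorBasis hS.eigenvalues := fun i => by
  rw [Matrix.toLpLin_apply, hS.mulVec_eigenvectorBasis]
  rfl

lemma antitone_eigsDesc (S : Matrix (Fin d) (Fin d) ℂ) : Antitone (eigsDesc S) := by
  unfold eigsDesc
  split_ifs
  exacts [antitone_sortDesc _, antitone_const]

lemma monotone_eigsAsc (S : Matrix (Fin d) (Fin d) ℂ) : Monotone (eigsAsc S) := by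
  unfold eigsAsc
  split_ifs
  exacts [Tuple.monotone_sort _, monotone_const]

lemma exists_isEigenbasis_eigsDesc (hS : S.IsHermitian) :
    ∃ u, IsEigenbasis S.toEuclideanLin u (eigsDesc S) := by
  obtain ⟨σ, hσ⟩ := exists_perm_sortDesc hS.eigenvalues
  rw [eigsDesc, dif_pos hS, hσ]
  exact ⟨_, (isEigenbasis_eigenvectorBasis hS).reindex σ.symm⟩

lemma exists_isEigenbasis_eigsAsc (hS : S.IsHermitian) :
    ∃ u, IsEigenbasis S.toEuclideanLin u (eigsAsc S) := by
  rw [eigsAsc, dif_pos hS]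
  exact ⟨_, (isEigenbasis_eigenvectorBasis hS).reindex (Tuple.sort hS.eigenvalues).symm⟩

lemma IsEigenbasis.potential_eq {u : OrthonormalBasis (Fin d) ℂ (EuclideanSpace ℂ (Fin d))}
    {α : Fin d → ℝ} (hu : IsEigenbasis S.toEuclideanLin u α) (f : ℝ → ℝ) :
    potential f S = ∑ i, f (α i) := by
  have hS : S.IsHermitian := Matrix.isSymmetric_toEuclideanLin_iff.mp hu.isSymmetric
  obtain ⟨v, hv⟩ := exists_isEigenbasis_eigsDesc hS
  obtain ⟨σ, hσ⟩ := exists_perm_sortDesc α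
  have hsort : IsEigenbasis S.toEuclideanLin (u.reindex σ.symm) (sortDesc α) :=
    hσ ▸ hu.reindex σ.symm
  rw [potential, hv.eigenvalues_eq_of_antitone hsort (antitone_eigsDesc S) (antitone_sortDesc α),
    sum_comp_sortDesc]

theorem sum_map_eigsAsc_add_eigsDesc_le {f : ℝ → ℝ} {t : Set ℝ} (hf : ConvexOn ℝ t f)
    {A B : Matrix (Fin d) (Fin d) ℂ} (hA : A.IsHermitian) (hB : B.IsHermitian)
    (ht : ∀ i, eigsDesc (A + B) i ∈ t) :
    ∑ i, f (eigsAsc A i + eigsDesc B i) ≤ potential f (A + B) := by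
  obtain ⟨u, hu⟩ := exists_isEigenbasis_eigsAsc hA
  obtain ⟨v, hv⟩ := exists_isEigenbasis_eigsDesc hB
  obtain ⟨w, hw⟩ := exists_isEigenbasis_eigsDesc (hA.add hB)
  rw [map_add] at hw
  exact sum_map_add_eigenvalues_le hf hu hv hw (monotone_eigsAsc A) (antitone_eigsDesc B)
    (antitone_eigsDesc _) ht

lemma eigsDesc_nonneg (hS : S.PosSemidef) (i : Fin d) : 0 ≤ eigsDesc S i := by
  obtain ⟨u, hu⟩ := exists_isEigenbasis_eigsDesc hS.isHermitian
  exact hu.eigenvalue_nonneg (Matrix.isPositive_toEuclideanLin_iff.mpr hS) i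

lemma eigsAsc_nonneg (hS : S.PosSemidef) (i : Fin d) : 0 ≤ eigsAsc S i := by
  obtain ⟨u, hu⟩ := exists_isEigenbasis_eigsAsc hS.isHermitian
  exact hu.eigenvalue_nonneg (Matrix.isPositive_toEuclideanLin_iff.mpr hS) i

lemma prefixMajorizedBy_eigsDesc_frameOp (G : Fin n → Fin d → ℂ) :
    PrefixMajorizedBy (fun i => normSqVec (G i)) (eigsDesc (frameOp G)) := by
  obtain ⟨u, hu⟩ := exists_isEigenbasis_eigsDesc (posSemidef_frameOp G).isHermitian
  rw [toEuclideanLin_frameOp] at hu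
  simpa only [normSqVec_eq_sq_norm] using prefixMajorizedBy_eigenvalues hu (antitone_eigsDesc _)

lemma exists_potential_add_frameOp_eq {a : Fin n → ℝ} {μ : Fin d → ℝ} (hS : S.IsHermitian)
    (hμ : ∀ i, 0 ≤ μ i) (ha : Antitone a) (haμ : PrefixMajorizedBy a μ) (f : ℝ → ℝ) :
    ∃ G : Fin n → Fin d → ℂ, (∀ i, normSqVec (G i) = a i) ∧
      potential f (S + frameOp G) = ∑ i, f (eigsAsc S i + μ i) := by
  obtain ⟨u, hu⟩ := exists_isEigenbasis_eigsAsc hS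
  obtain ⟨g, hga, hg⟩ := exists_isEigenbasis_frameOperator u hμ ha haμ
  refine ⟨fun i => (g i).ofLp, fun i => by rw [normSqVec_eq_sq_norm, hga], ?_⟩
  refine IsEigenbasis.potential_eq (u := u) (α := eigsAsc S + μ) ?_ f
  rw [map_add, toEuclideanLin_frameOp]
  exact hu.add hg

end Matrix

section Optimality

variable {d k : ℕ} {f : ℝ → ℝ} {a : Fin k → ℝ} {u v : Fin d}

lemma exists_prefixMajorizedBy_sum_map_add_lt {t : Set ℝ} {lam μ : Fin d → ℝ}
    (hf : StrictConvexOn ℝ t f) (ht : ∀ i, lam i + μ i ∈ t) (hlam : Monotone lam)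
    (hμ : ∀ i, 0 ≤ μ i) (haμ : PrefixMajorizedBy a μ) (huv : u.val + 1 = v)
    (hslack : prefixSum a v < prefixSum μ v) (hgap : lam v + μ v < lam u + μ u) :
    ∃ μ' : Fin d → ℝ, (∀ i, 0 ≤ μ' i) ∧ PrefixMajorizedBy a μ' ∧
      ∑ i, f (lam i + μ' i) < ∑ i, f (lam i + μ i) := by
  have huv' : u < v := by lia
  have hlamuv : lam u ≤ lam v := hlam huv'.le
  obtain ⟨δ, hδ0, hδslack, hδgap⟩ : ∃ δ, 0 < δ ∧ δ ≤ prefixSum μ v - prefixSum a v ∧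
      δ < lam u + μ u - (lam v + μ v) := by
    obtain ⟨δ, hδ0, hδ⟩ := exists_between (lt_min (sub_pos.mpr hslack) (sub_pos.mpr hgap))
    exact ⟨δ, hδ0, (lt_min_iff.mp hδ).1.le, (lt_min_iff.mp hδ).2⟩
  refine ⟨transfer μ u v δ, ?_, haμ.transfer_right huv' fun r hur hrv => ?_, ?_⟩
  · exact forall_transfer μ δ (p := fun _ z => 0 ≤ z) huv'.ne (by linarith [hμ v])
      (by linarith [hμ v]) hμ
  · obtain rfl : r = v := by lia
    linarith
  · have htransfer := sum_transfer_sub_sum μ δ (fun i z => f (lam i + z)) huv'.ne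
    have hconvex := map_sub_add_map_add_lt_of_strictConvexOn hf (ht u) (ht v) hδ0 hδgap
    rw [add_sub_assoc, add_assoc (lam v)] at hconvex
    linarith

theorem prefixSum_eq_of_forall_potential_le {S : Matrix (Fin d) (Fin d) ℂ}
    {G : Fin k → Fin d → ℂ} (hf : StrictConvexOn ℝ (Set.Ici 0) f)
    (hS : S.PosSemidef) (ha : Antitone a) (hG : ∀ i, normSqVec (G i) = a i)
    (hmin : ∀ G' : Fin k → Fin d → ℂ, (∀ i, normSqVec (G' i) = a i) →
      potential f (S + frameOp G) ≤ potential f (S + frameOp G')) (huv : u.val + 1 = v)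
    (hgap : eigsAsc S v + eigsDesc (frameOp G) v < eigsAsc S u + eigsDesc (frameOp G) u) :
    prefixSum a v = prefixSum (eigsDesc (frameOp G)) v := by
  have hGpos := posSemidef_frameOp G
  have haμ : PrefixMajorizedBy a (eigsDesc (frameOp G)) :=
    funext hG ▸ prefixMajorizedBy_eigsDesc_frameOp G
  by_contra hne
  obtain ⟨μ', hμ', haμ', hlt⟩ := exists_prefixMajorizedBy_sum_map_add_lt hf
    (fun i => add_nonneg (eigsAsc_nonneg hS i) (eigsDesc_nonneg hGpos i)) (monotone_eigsAsc S)
    (eigsDesc_nonneg hGpos) haμ huv ((haμ.prefixSum_le v).lt_of_ne hne) hgap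
  obtain ⟨G', hG', hpot⟩ := exists_potential_add_frameOp_eq hS.isHermitian hμ' ha haμ' f
  exact ((sum_map_eigsAsc_add_eigsDesc_le hf.convexOn hS.isHermitian hGpos.isHermitian
    (eigsDesc_nonneg (hS.add hGpos))).trans (hmin G' hG')).not_gt (hpot ▸ hlt)

end Optimality

section InitialAverages

open scoped BigOperators

variable {d k : ℕ} {lam μ : Fin d → ℝ} {a : Fin k → ℝ} {C : ℝ} {lo hi : ℕ}

lemma sum_window (x : Fin k → ℝ) (h : lo ≤ hi) :
    (∑ i, if lo ≤ i.val ∧ i.val < hi then x i else 0) = prefixSum x hi - prefixSum x lo := by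
  rw [prefixSum, prefixSum, sum_filter, sum_filter, ← sum_sub_distrib]
  refine sum_congr rfl fun i _ => ?_
  grind

lemma initAvg_eq (lam : Fin d → ℝ) (a : Fin k → ℝ) (h : lo ≤ hi) :
    initAvg lam a lo hi =
      (prefixSum lam hi - prefixSum lam lo + (prefixSum a hi - prefixSum a lo)) /
        ((hi : ℝ) - lo) := by
  rw [initAvg, sum_window lam h, sum_window a h]

lemma initAvg_eq_expect (lam μ : Fin d → ℝ) (h : lo ≤ hi) (hd : hi ≤ d) :
    initAvg lam μ lo hi = 𝔼 i : Fin d with lo ≤ i.val ∧ i.val < hi, (lam i + μ i) := by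
  have hcard : #{i : Fin d | lo ≤ i.val ∧ i.val < hi} = hi - lo := by
    rw [← Nat.card_Ico, ← card_map Fin.valEmbedding]
    congr 1
    ext i
    simp only [mem_map, mem_filter_univ, Fin.valEmbedding_apply, mem_Ico]
    exact ⟨fun ⟨_, hl, hli⟩ => hli ▸ hl, fun hi => ⟨⟨i, by lia⟩, hi, rfl⟩⟩
  rw [expect_eq_sum_div_card, hcard, Nat.cast_sub h, initAvg, sum_filter, ← sum_add_distrib]
  congr 1
  exact sum_congr rfl fun i _ => by split_ifs <;> simp only [add_zero]

lemma nonempty_window (h : lo < hi) (hd : hi ≤ d) :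
    ({i | lo ≤ i.val ∧ i.val < hi} : Finset (Fin d)).Nonempty :=
  ⟨⟨lo, h.trans_le hd⟩, by simpa using h⟩

lemma initAvg_eq_of_forall_eq (h : lo < hi) (hd : hi ≤ d)
    (hC : ∀ i : Fin d, lo ≤ i.val → i.val < hi → lam i + μ i = C) : initAvg lam μ lo hi = C := by
  rw [initAvg_eq_expect lam μ h.le hd, ← expect_const (nonempty_window h hd) C]
  refine expect_congr rfl fun i hi => ?_
  obtain ⟨hlo, hhi⟩ := (mem_filter.mp hi).2
  exact hC i hlo hhi

lemma initAvg_le_of_forall_le (h : lo < hi) (hd : hi ≤ d)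
    (hC : ∀ i : Fin d, lo ≤ i.val → i.val < hi → lam i + μ i ≤ C) : initAvg lam μ lo hi ≤ C := by
  rw [initAvg_eq_expect lam μ h.le hd]
  refine expect_le (nonempty_window h hd) fun i hi => ?_
  obtain ⟨hlo, hhi⟩ := (mem_filter.mp hi).2
  exact hC i hlo hhi

lemma initAvg_lt_of_forall_le (hd : hi ≤ d)
    (hC : ∀ i : Fin d, lo ≤ i.val → i.val < hi → lam i + μ i ≤ C)
    (hlt : ∃ i : Fin d, lo ≤ i.val ∧ i.val < hi ∧ lam i + μ i < C) : initAvg lam μ lo hi < C := by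
  obtain ⟨l, hlol, hlhi, hl⟩ := hlt
  rw [initAvg_eq_expect lam μ (hlol.trans hlhi.le) hd]
  refine expect_lt (fun i hi => ?_) ⟨l, by simpa using ⟨hlol, hlhi⟩, hl⟩
  obtain ⟨hlo, hhi⟩ := (mem_filter.mp hi).2
  exact hC i hlo hhi

lemma initAvg_le_initAvg (h : lo ≤ hi) (hlo : prefixSum a lo = prefixSum μ lo)
    (hhi : prefixSum a hi ≤ prefixSum μ hi) : initAvg lam a lo hi ≤ initAvg lam μ lo hi := by
  rw [initAvg_eq lam a h, initAvg_eq lam μ h, hlo]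
  gcongr
  exact sub_nonneg.mpr (Nat.cast_le.mpr h)

lemma initAvg_eq_initAvg (h : lo ≤ hi) (hlo : prefixSum a lo = prefixSum μ lo)
    (hhi : prefixSum a hi = prefixSum μ hi) : initAvg lam a lo hi = initAvg lam μ lo hi := by
  rw [initAvg_eq lam a h, initAvg_eq lam μ h, hlo, hhi]

theorem isGreatest_initAvg {A B T : ℕ} (hAB : A < B) (hBT : B ≤ T) (hTd : T ≤ d)
    (haμ : ∀ r, prefixSum a r ≤ prefixSum μ r) (hA : prefixSum a A = prefixSum μ A)
    (hB : prefixSum a B = prefixSum μ B)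
    (heq : ∀ i : Fin d, A ≤ i.val → i.val < B → lam i + μ i = C)
    (hlt : ∀ i : Fin d, B ≤ i.val → i.val < T → lam i + μ i < C) :
    IsGreatest {r | A < r ∧ r ≤ T ∧
        ∀ i, A < i → i ≤ T → initAvg lam a A i ≤ initAvg lam a A r} B ∧
      C = initAvg lam a A B := by
  have hle (i : Fin d) (hAi : A ≤ i.val) (hiT : i.val < T) : lam i + μ i ≤ C :=
    (lt_or_ge i.val B).elim (fun hiB => (heq i hAi hiB).le) fun hBi => (hlt i hBi hiT).le
  have havgB : initAvg lam a A B = C := by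
    rw [initAvg_eq_initAvg hAB.le hA hB, initAvg_eq_of_forall_eq hAB (hBT.trans hTd) heq]
  have havg_le (r : ℕ) (hAr : A < r) (hrT : r ≤ T) : initAvg lam a A r ≤ C :=
    (initAvg_le_initAvg hAr.le hA (haμ r)).trans (initAvg_le_of_forall_le hAr (hrT.trans hTd)
      fun i hAi hir => hle i hAi (hir.trans_le hrT))
  have havg_lt (r : ℕ) (hBr : B < r) (hrT : r ≤ T) : initAvg lam a A r < C :=
    (initAvg_le_initAvg (hAB.trans hBr).le hA (haμ r)).trans_lt (initAvg_lt_of_forall_le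
      (hrT.trans hTd) (fun i hAi hir => hle i hAi (hir.trans_le hrT))
      ⟨⟨B, by lia⟩, hAB.le, hBr, hlt _ le_rfl (hBr.trans_le hrT)⟩)
  refine ⟨⟨⟨hAB, hBT, havgB.symm ▸ havg_le⟩, fun r ⟨_, hrT, hmax⟩ => not_lt.mp fun hBr => ?_⟩,
    havgB.symm⟩
  exact (havg_lt r hBr hrT).not_ge (havgB ▸ hmax B hAB hBT)

end InitialAverages

section Blocks

variable {d k p : ℕ} {s : Fin (p + 1) → ℕ} {c : Fin p → ℝ}

lemma exists_castSucc_le_lt_succ {α : Type*} [LinearOrder α] {s : Fin (p + 1) → α} {n : α}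
    (h0 : s 0 ≤ n) (hn : n < s (Fin.last p)) : ∃ l : Fin p, s l.castSucc ≤ n ∧ n < s l.succ := by
  by_contra! h
  exact (Fin.induction (motive := fun l => s l ≤ n) h0 h (Fin.last p)).not_gt hn

lemma lt_of_succ_le_of_blocks {x : Fin d → ℝ} (hc : StrictAnti c) (hs0 : s 0 = 0)
    (hs : StrictMono s)
    (hblock : ∀ (j : Fin p) (i : Fin d), s j.castSucc ≤ i.val → i.val < s j.succ → x i = c j)
    {j : Fin p} {i : Fin d} (hji : s j.succ ≤ i.val) (hi : i.val < s (Fin.last p)) : x i < c j := by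
  obtain ⟨l, hli, hil⟩ := exists_castSucc_le_lt_succ (hs0.trans_le i.val.zero_le) hi
  rw [hblock l i hli hil]
  exact hc (Fin.succ_lt_succ_iff.mp (hs.lt_iff_lt.mp (hji.trans_lt hil)))

lemma prefixSum_eq_of_blocks {f : ℝ → ℝ} {a : Fin k → ℝ} {S : Matrix (Fin d) (Fin d) ℂ}
    {G : Fin k → Fin d → ℂ} (hf : StrictConvexOn ℝ (Set.Ici 0) f) (hS : S.PosSemidef)
    (ha : Antitone a) (hG : ∀ i, normSqVec (G i) = a i)
    (hmin : ∀ G' : Fin k → Fin d → ℂ, (∀ i, normSqVec (G' i) = a i) →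
      potential f (S + frameOp G) ≤ potential f (S + frameOp G'))
    (hc : StrictAnti c) (hs0 : s 0 = 0) (hs : StrictMono s) (hsd : s (Fin.last p) ≤ d)
    (hblock : ∀ (j : Fin p) (i : Fin d), s j.castSucc ≤ i.val → i.val < s j.succ →
      eigsAsc S i + eigsDesc (frameOp G) i = c j) (j : Fin p) :
    prefixSum a (s j.castSucc) = prefixSum (eigsDesc (frameOp G)) (s j.castSucc) := by
  obtain ⟨_ | j, hj⟩ := j
  · simp [hs0]
  let l : Fin p := ⟨j, by lia⟩
  let m : Fin p := ⟨j + 1, hj⟩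
  have hl : s l.castSucc < s l.succ := hs l.castSucc_lt_succ
  have hm : s l.succ < s m.succ := hs (Fin.lt_def.mpr (Nat.lt_succ_self _))
  have hmd : s m.succ ≤ d := (hs.monotone (Fin.le_last _)).trans hsd
  refine prefixSum_eq_of_forall_potential_le hf hS ha hG hmin (u := ⟨s l.succ - 1, by lia⟩)
    (v := ⟨s l.succ, by lia⟩) (Nat.sub_add_cancel hl.pos) ?_
  rw [hblock m _ le_rfl hm, hblock l _ (Nat.le_sub_one_of_lt hl) (Nat.sub_one_lt hl.ne_bot)]
  exact hc (Fin.lt_def.mpr (Nat.lt_succ_self j))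

end Blocks

theorem stmt_13_general {d k p : ℕ} {S : Matrix (Fin d) (Fin d) ℂ} (hS : S.PosSemidef)
    {a : Fin k → ℝ} (ha : Antitone a) {f : ℝ → ℝ} (hf : StrictConvexOn ℝ (Set.Ici 0) f)
    {G : Fin k → Fin d → ℂ} (hG : ∀ i, normSqVec (G i) = a i)
    (hmin : ∀ G' : Fin k → Fin d → ℂ, (∀ i, normSqVec (G' i) = a i) →
      potential f (S + frameOp G) ≤ potential f (S + frameOp G'))
    {c : Fin p → ℝ} (hc : StrictAnti c) {s : Fin (p + 1) → ℕ} (hs0 : s 0 = 0)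
    (hs : StrictMono s) (hsd : s (Fin.last p) ≤ d)
    (hblock : ∀ (j : Fin p) (i : Fin d), s j.castSucc ≤ i.val → i.val < s j.succ →
      eigsAsc S i + eigsDesc (frameOp G) i = c j)
    (j : ℕ) (hj : j + 1 < p) :
    IsGreatest {r : ℕ | s ⟨j, by lia⟩ < r ∧ r ≤ s ⟨p - 1, by lia⟩ ∧
        ∀ i, s ⟨j, by lia⟩ < i → i ≤ s ⟨p - 1, by lia⟩ →
          initAvg (eigsAsc S) a (s ⟨j, by lia⟩) i ≤ initAvg (eigsAsc S) a (s ⟨j, by lia⟩) r}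
      (s ⟨j + 1, by lia⟩) ∧
    c ⟨j, by lia⟩ = initAvg (eigsAsc S) a (s ⟨j, by lia⟩) (s ⟨j + 1, by lia⟩) := by
  have haμ : PrefixMajorizedBy a (eigsDesc (frameOp G)) :=
    funext hG ▸ prefixMajorizedBy_eigsDesc_frameOp G
  have hprefix := prefixSum_eq_of_blocks hf hS ha hG hmin hc hs0 hs hsd hblock
  have hlast : s ⟨p - 1, by lia⟩ ≤ s (Fin.last p) := hs.monotone (Fin.le_last _)
  exact isGreatest_initAvg (hs (Fin.lt_def.mpr (Nat.lt_succ_self j)))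
    (hs.monotone (Fin.le_def.mpr (Nat.le_sub_one_of_lt hj))) (hlast.trans hsd) haμ.prefixSum_le
    (hprefix ⟨j, by lia⟩) (hprefix ⟨j + 1, hj⟩) (hblock ⟨j, by lia⟩) fun i hji hi =>
      lt_of_succ_le_of_blocks hc hs0 hs hblock (j := ⟨j, by lia⟩) hji (hi.trans_le hlast)

theorem stmt_13 {d n₀ k : ℕ} (hdk : d ≤ k)
    (F₀ : Fin n₀ → Fin d → ℂ) (a : Fin k → ℝ)
    (ha_pos : ∀ i, 0 < a i) (ha_mono : Antitone a)
    (f : ℝ → ℝ) (hf : StrictConvexOn ℝ (Set.Ici 0) f) (hf0 : ∀ x ∈ Set.Ici (0 : ℝ), 0 ≤ f x)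
    (G : Fin k → Fin d → ℂ) (hG : ∀ i, normSqVec (G i) = a i)
    (hmin : ∀ G' : Fin k → Fin d → ℂ, (∀ i, normSqVec (G' i) = a i) →
      potential f (frameOp F₀ + frameOp G) ≤ potential f (frameOp F₀ + frameOp G'))
    (lam μ : Fin d → ℝ) (hlam : lam = eigsAsc (frameOp F₀)) (hμ : μ = eigsDesc (frameOp G))
    (sF : ℕ) (hsF : sF = (frameOp G).rank)
    (p : ℕ) (hp1 : 1 < p) (c : Fin p → ℝ) (hcanti : StrictAnti c) (hcpos : ∀ j, 0 < c j)
    (s : Fin (p + 1) → ℕ) (hs0 : s 0 = 0) (hsm : StrictMono s) (hsl : s (Fin.last p) = sF)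
    (hblock : ∀ j : Fin p, ∀ i : Fin d,
      s j.castSucc ≤ (i : ℕ) → (i : ℕ) < s j.succ → lam i + μ i = c j)
    (htail : ∀ i : Fin d, sF ≤ (i : ℕ) → μ i = 0) :
    ∀ (j : ℕ) (hj : j + 1 < p),
      IsGreatest {r : ℕ | s ⟨j, by omega⟩ < r ∧ r ≤ s ⟨p - 1, by omega⟩ ∧
          ∀ i, s ⟨j, by omega⟩ < i → i ≤ s ⟨p - 1, by omega⟩ →
            initAvg lam a (s ⟨j, by omega⟩) i ≤ initAvg lam a (s ⟨j, by omega⟩) r}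
        (s ⟨j + 1, by omega⟩) ∧
      c ⟨j, by omega⟩ = initAvg lam a (s ⟨j, by omega⟩) (s ⟨j + 1, by omega⟩) :=
  hlam ▸ stmt_13_general (posSemidef_frameOp F₀) ha_mono hf hG hmin hcanti hs0 hsm
    (hsl.trans_le (hsF.trans_le (Matrix.rank_le_height _))) (hlam ▸ hμ ▸ hblock)
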